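/- Let R be a regular domain with a generalized regular system of parameters x = x_1,…,x_p. Let I ⊆ R be an ideal and let g_1,…,g_s be a generating set of I. Then Γ_x(I) = conv⟨Γ_x(g_1) ∪ ⋯ ∪ Γ_x(g_s)⟩. In particular, the Newton polyhedron of I can be computed from any generating set and does not depend on the choice of generators. -/

import Mathlib

open Ideal Set Pointwise

noncomputable section

namespace NND

variable {R : Type*} [CommRing R] {p : ℕ}

/-- The monomial `x^a = x 0 ^ a 0 * ⋯` in the elements `x`. -/
def mono (x : Fin p → R) (a : Fin p → ℕ) : R := ∏ i, x i ^ a i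

/-- A (commutative) ring is regular local if it is Noetherian local and its maximal ideal
can be generated by `dim R` elements. -/
def IsRegularLocal (A : Type*) [CommRing A] : Prop :=
  IsNoetherianRing A ∧ ∃ h : IsLocalRing A, ∃ s : Finset A,
    Ideal.span (s : Set A) = @IsLocalRing.maximalIdeal A _ h ∧
    (s.card : WithBot (WithTop ℕ)) = ringKrullDim A

/-- A regular domain: an integral domain whose localization at every prime is regular local. -/
def IsRegularDomain (A : Type*) [CommRing A] : Prop :=
  IsDomain A ∧ ∀ (P : Ideal A) (hP : P.IsPrime), IsRegularLocal (@Localization.AtPrime A _ P hP)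

/-- `x` is a regular sequence. -/
def IsRegSeq (x : Fin p → R) : Prop :=
  Ideal.span (Set.range x) ≠ ⊤ ∧
  ∀ i : Fin p, ∀ r : R, r * x i ∈ Ideal.span (x '' {j | j < i}) →
    r ∈ Ideal.span (x '' {j | j < i})

/-- A generalized regular system of parameters: a permutable regular sequence all of whose
subquotients are regular domains. -/
def IsGRSOP (x : Fin p → R) : Prop :=
  (∀ σ : Equiv.Perm (Fin p), IsRegSeq (x ∘ σ)) ∧
  ∀ S : Set (Fin p), IsRegularDomain (R ⧸ Ideal.span (x '' S))

/-- `A` is the exponent set of a monomial representation of `f`: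
`h * f = ∑_{a ∈ A} r a * x^a` with `h` and the `r a` outside `(x_1, …, x_p)`. -/
def IsMonRep (x : Fin p → R) (f : R) (A : Finset (Fin p → ℕ)) : Prop :=
  ∃ (h : R) (r : (Fin p → ℕ) → R),
    h ∉ Ideal.span (Set.range x) ∧ (∀ a ∈ A, r a ∉ Ideal.span (Set.range x)) ∧
    h * f = ∑ a ∈ A, r a * mono x a

/-- A minimal (irredundant) monomial representation: no monomial divides another. -/
def IsMinMonRep (x : Fin p → R) (f : R) (A : Finset (Fin p → ℕ)) : Prop :=
  IsMonRep x f A ∧ ∀ a ∈ A, ∀ b ∈ A, a ≠ b → ¬ mono x a ∣ mono x b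

open Classical in
/-- The support of `f`: the exponent set of its (unique) minimal monomial representation. -/
def supp (x : Fin p → R) (f : R) : Set (Fin p → ℕ) :=
  if h : ∃ A : Finset (Fin p → ℕ), IsMinMonRep x f A then ↑h.choose else ∅

/-- Embedding of exponent vectors into `ℝ^p`. -/
def toR (a : Fin p → ℕ) : Fin p → ℝ := fun i => (a i : ℝ)

/-- The Newton polyhedron of a set of ring elements. -/
def Γ (x : Fin p → R) (S : Set R) : Set (Fin p → ℝ) :=
  convexHull ℝ (toR '' ⋃ f ∈ S, supp x f)

/-- The Newton polyhedron `Γ_x(I)` of an ideal. -/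
def ΓI (x : Fin p → R) (I : Ideal R) : Set (Fin p → ℝ) := Γ x (I : Set R)

/-- The Newton polyhedron `Γ_x(f)` of an element: that of the principal ideal `(f)`. -/
def ΓE (x : Fin p → R) (f : R) : Set (Fin p → ℝ) := ΓI x (Ideal.span {f})

/-- The integral closure of an ideal `I`: elements satisfying an equation of integral
dependence `f^n + a_1 f^{n-1} + ⋯ + a_n = 0` with `a_i ∈ I^i`. -/
def intClosure (I : Ideal R) : Set R :=
  {f | ∃ n : ℕ, 0 < n ∧ ∃ a : ℕ → R, (∀ i ∈ Finset.Icc 1 n, a i ∈ I ^ i) ∧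
    f ^ n + ∑ i ∈ Finset.Icc 1 n, a i * f ^ (n - i) = 0}

/-- The monomial ideal `I_0` spanned by the lattice points of `Γ_x(I)`. -/
def idealZero (x : Fin p → R) (I : Ideal R) : Ideal R :=
  Ideal.span (mono x '' {a | toR a ∈ ΓI x I})

/-- The ideal `K_I` generated by the monomials lying in the integral closure of `I`. -/
def KIdeal (x : Fin p → R) (I : Ideal R) : Ideal R :=
  Ideal.span {m | (∃ a : Fin p → ℕ, m = mono x a) ∧ m ∈ intClosure I}

/-!
Write `C_a` for the ideal `(x_1^{a_1 + 1}, …, x_p^{a_p + 1})`. If each `x_i` is a nonzerodivisor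
modulo any of the others and `P = (x_1, …, x_p)` is prime, then elements outside `P` stay
nonzerodivisors modulo `C_a`, and the colon ideal `C_{b + c} : x^c` is `C_b`. Reading a minimal
representation of `f` modulo `C_a` therefore shows that its exponents are exactly the minimal
elements of `{a | f ∉ C_a}`; it exists by Dickson's lemma and Krull's intersection theorem in `R_P`.
Multiplying by monomials fills in the elements above the minimal ones, so the exponents occurring in
an ideal `I` form the set `{a | ¬ I ≤ C_a}`. An ideal is contained in `C_a` if and only if its
generators are, so this set is the union of the corresponding sets for the generators.
-/

section PermutableRegular

variable {ι : Type*} {x : ι → R}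

/-- A family in which each member is a nonzerodivisor modulo any set of other members, i.e. a
regular sequence in every order. Unlike `IsRegSeq`, it may generate the unit ideal, and its index
type is arbitrary. -/
def IsPermutableRegular (x : ι → R) : Prop :=
  ∀ S : Set ι, ∀ i ∉ S, IsSMulRegular (R ⧸ Ideal.span (x '' S)) (x i)

lemma mem_span_pow_sup_of_pow_mul_mem {K : Ideal R} {y r : R} (hy : IsSMulRegular (R ⧸ K) y)
    {m k : ℕ} (h : y ^ m * r ∈ Ideal.span {y ^ (m + k)} ⊔ K) : r ∈ Ideal.span {y ^ k} ⊔ K := by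
  obtain ⟨t, c, hc, hsum⟩ := Ideal.mem_span_singleton_sup.1 h
  have hdiff : y ^ m • (r - t * y ^ k) ∈ K := by
    convert hc using 1
    rw [smul_eq_mul]
    linear_combination -hsum
  exact Ideal.mem_span_singleton_sup.2
    ⟨t, _, mem_of_isSMulRegular_quotient_of_smul_mem (hy.pow m) hdiff, by ring⟩

lemma isSMulRegular_quotient_span_pow_sup {K : Ideal R} {y z : R}
    (hy : IsSMulRegular (R ⧸ K) y) (hz : IsSMulRegular (R ⧸ Ideal.span {y} ⊔ K) z) (m : ℕ) :
    IsSMulRegular (R ⧸ Ideal.span {y ^ m} ⊔ K) z := by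
  rw [isSMulRegular_quotient_iff_mem_of_smul_mem]
  induction m with
  | zero => simp
  | succ m ih =>
    intro r hzr
    have hle : Ideal.span {y ^ (m + 1)} ⊔ K ≤ Ideal.span {y ^ m} ⊔ K :=
      sup_le_sup_right (Ideal.span_singleton_le_span_singleton.2 (pow_dvd_pow y m.le_succ)) K
    obtain ⟨u, c, hc, rfl⟩ := Ideal.mem_span_singleton_sup.1 (ih r (hle hzr))
    have hzu : y ^ m * (z * u) ∈ Ideal.span {y ^ (m + 1)} ⊔ K := by
      convert sub_mem hzr (Ideal.mul_mem_left _ z (Ideal.mem_sup_right hc)) using 1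
      rw [smul_eq_mul]
      ring
    have hu : u ∈ Ideal.span {y} ⊔ K := by
      refine mem_of_isSMulRegular_quotient_of_smul_mem hz ?_
      simpa only [pow_one, smul_eq_mul] using mem_span_pow_sup_of_pow_mul_mem hy hzu
    obtain ⟨v, d, hd, rfl⟩ := Ideal.mem_span_singleton_sup.1 hu
    exact Ideal.mem_span_singleton_sup.2
      ⟨v, d * y ^ m + c, add_mem (Ideal.mul_mem_right _ _ hd) hc, by ring⟩

lemma IsPermutableRegular.isSMulRegular_quotient_span_pow_union
    (hx : IsPermutableRegular x) (n : ι → ℕ) (T : Finset ι) :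
    ∀ {S : Set ι} {z : R}, Disjoint (T : Set ι) S →
      IsSMulRegular (R ⧸ Ideal.span (x '' (T ∪ S))) z →
      IsSMulRegular (R ⧸ Ideal.span ((fun i => x i ^ n i) '' T ∪ x '' S)) z := by
  classical
  induction T using Finset.induction_on with
  | empty =>
    intro S z _ hz
    rw [Finset.coe_empty, Set.empty_union] at hz
    rwa [Finset.coe_empty, Set.image_empty, Set.empty_union]
  | insert j T hj ih =>
    intro S z hTS hz
    simp only [Finset.coe_insert, Set.disjoint_insert_left] at hTS
    have hxj : IsSMulRegular (R ⧸ Ideal.span ((fun i => x i ^ n i) '' T ∪ x '' S)) (x j) :=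
      ih hTS.2 (hx _ j (by simp [hj, hTS.1]))
    have hzj : IsSMulRegular
        (R ⧸ Ideal.span {x j} ⊔ Ideal.span ((fun i => x i ^ n i) '' T ∪ x '' S)) z := by
      rw [← Ideal.span_insert, ← Set.union_insert, ← Set.image_insert_eq]
      refine ih (Set.disjoint_insert_right.2 ⟨by simpa using hj, hTS.2⟩) ?_
      rwa [Set.union_insert, ← Set.insert_union, ← Finset.coe_insert]
    rw [Finset.coe_insert, Set.image_insert_eq, Set.insert_union, Ideal.span_insert]
    exact isSMulRegular_quotient_span_pow_sup hxj hzj (n j)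

lemma IsPermutableRegular.isSMulRegular_quotient_span_pow [Finite ι]
    (hx : IsPermutableRegular x) (n : ι → ℕ) (S : Set ι) {z : R}
    (hz : IsSMulRegular (R ⧸ Ideal.span (x '' S)) z) :
    IsSMulRegular (R ⧸ Ideal.span ((fun i => x i ^ n i) '' S)) z := by
  obtain ⟨T, rfl⟩ := S.toFinite.exists_finset_coe
  rw [← Set.union_empty (_ '' _), ← Set.image_empty x]
  exact hx.isSMulRegular_quotient_span_pow_union n T (Set.disjoint_empty _)
    (by rwa [Set.union_empty])

end PermutableRegular

lemma exists_notMem_mul_mem_of_forall_mem_sup_pow (P : Ideal R) [P.IsPrime]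
    [IsNoetherianRing (Localization.AtPrime P)] (J : Ideal R) (f : R)
    (h : ∀ N : ℕ, f ∈ J ⊔ P ^ N) : ∃ k ∉ P, k * f ∈ J := by
  let L := Localization.AtPrime P
  let J' := J.map (algebraMap R L)
  have hmod (N : ℕ) : (Ideal.Quotient.mk J' (algebraMap R L f)) ≡ 0
      [SMOD (IsLocalRing.maximalIdeal L ^ N • ⊤ : Submodule L (L ⧸ J'))] := by
    obtain ⟨y, hy, z, hz, rfl⟩ := Submodule.mem_sup.1 (h N)
    have hy' : Ideal.Quotient.mk J' (algebraMap R L y) = 0 :=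
      Ideal.Quotient.eq_zero_iff_mem.2 (Ideal.mem_map_of_mem _ hy)
    have hz' : algebraMap R L z ∈ IsLocalRing.maximalIdeal L ^ N := by
      rw [← Localization.AtPrime.map_eq_maximalIdeal, ← Ideal.map_pow]
      exact Ideal.mem_map_of_mem _ hz
    rw [SModEq.zero, map_add, map_add, hy', zero_add, ← mul_one (algebraMap R L z)]
    exact Submodule.smul_mem_smul hz' (Submodule.mem_top (x := (1 : L ⧸ J')))
  have hf : algebraMap R L f ∈ J' :=
    Ideal.Quotient.eq_zero_iff_mem.1 (IsHausdorff.haus inferInstance _ hmod)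
  obtain ⟨k, hk, hkf⟩ := (IsLocalization.algebraMap_mem_map_algebraMap_iff P.primeCompl L J f).1 hf
  exact ⟨k, hk, hkf⟩

section Monomial

variable (x : Fin p → R)

lemma mono_add (a b : Fin p → ℕ) : mono x (a + b) = mono x a * mono x b := by
  simp [mono, pow_add, Finset.prod_mul_distrib]

lemma mono_single (i : Fin p) (m : ℕ) : mono x (Pi.single i m) = x i ^ m := by
  unfold mono
  rw [Finset.prod_eq_single i] <;> simp +contextual

lemma mono_dvd_mono {a b : Fin p → ℕ} (h : a ≤ b) : mono x a ∣ mono x b := by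
  obtain ⟨c, rfl⟩ := exists_add_of_le h
  exact Dvd.intro _ (mono_add x a c).symm

lemma mono_mem_span_range_pow (a : Fin p → ℕ) :
    mono x a ∈ Ideal.span (Set.range x) ^ ∑ i, a i := by
  rw [← Finset.prod_pow_eq_pow_sum]
  exact Ideal.prod_mem_prod fun i _ =>
    Ideal.pow_mem_pow (Ideal.subset_span (Set.mem_range_self i)) _

/-- The ideal generated by the monomials in `x` with exponents in `U`. -/
def monomialIdeal (U : Set (Fin p → ℕ)) : Ideal R := Ideal.span (mono x '' U)

lemma mono_mem_monomialIdeal {U : Set (Fin p → ℕ)} {a : Fin p → ℕ} (ha : a ∈ U) :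
    mono x a ∈ monomialIdeal x U :=
  Ideal.subset_span ⟨a, ha, rfl⟩

lemma monomialIdeal_union (U V : Set (Fin p → ℕ)) :
    monomialIdeal x (U ∪ V) = monomialIdeal x U ⊔ monomialIdeal x V := by
  rw [monomialIdeal, Set.image_union, Ideal.span_union, monomialIdeal, monomialIdeal]

lemma mul_mono_mem_monomialIdeal {U : Set (Fin p → ℕ)} {a : Fin p → ℕ} {c : R}
    (hc : c ∈ Ideal.span (Set.range x)) (hU : ∀ i, a + Pi.single i 1 ∈ U) :
    c * mono x a ∈ monomialIdeal x U := by
  obtain ⟨t, rfl⟩ := Ideal.mem_span_range_iff_exists_fun.1 hc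
  rw [Finset.sum_mul]
  refine Ideal.sum_mem _ fun i _ => ?_
  have hmono : t i * x i * mono x a = t i * mono x (a + Pi.single i 1) := by
    rw [mono_add, mono_single, pow_one]
    ring
  rw [hmono]
  exact Ideal.mul_mem_left _ _ (mono_mem_monomialIdeal x (hU i))

lemma exists_eq_sum_of_mem_monomialIdeal {A : Finset (Fin p → ℕ)} {f : R}
    (hf : f ∈ monomialIdeal x A) : ∃ c : (Fin p → ℕ) → R, f = ∑ a ∈ A, c a * mono x a := by
  obtain ⟨c, hc⟩ := (Submodule.mem_span_image_finset_iff_exists_fun' R).1 hf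
  exact ⟨c, by simpa using hc.symm⟩

end Monomial

section CornerIdeal

variable (x : Fin p → R)

/-- The irreducible monomial ideal `(x_1^{a_1 + 1}, …, x_p^{a_p + 1})`. The monomials outside it
are the `x^b` with `b ≤ a`, so `f ∉ cornerIdeal x a` says that some term of `f` divides `x^a`. -/
def cornerIdeal (a : Fin p → ℕ) : Ideal R :=
  Ideal.span (Set.range fun i => x i ^ (a i + 1))

lemma cornerIdeal_zero : cornerIdeal x 0 = Ideal.span (Set.range x) := by
  simp [cornerIdeal]

lemma cornerIdeal_eq_sup (a : Fin p → ℕ) (j : Fin p) :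
    cornerIdeal x a =
      Ideal.span {x j ^ (a j + 1)} ⊔ Ideal.span ((fun i => x i ^ (a i + 1)) '' {j}ᶜ) := by
  rw [← Ideal.span_insert, ← Set.image_insert_eq (f := fun i => x i ^ (a i + 1)),
    Set.insert_eq, Set.union_compl_self, Set.image_univ, cornerIdeal]

lemma cornerIdeal_antitone : Antitone (cornerIdeal x) := by
  intro a b hab
  refine Ideal.span_le.2 (Set.range_subset_iff.2 fun i => ?_)
  exact Ideal.mem_of_dvd _ (pow_dvd_pow _ (Nat.succ_le_succ (hab i)))
    (Ideal.subset_span (Set.mem_range_self i))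

lemma mono_mem_cornerIdeal {a b : Fin p → ℕ} (h : ¬ b ≤ a) :
    mono x b ∈ cornerIdeal x a := by
  obtain ⟨i, hi⟩ : ∃ i, a i < b i := by simpa [Pi.le_def] using h
  refine Ideal.mem_of_dvd _ ?_ (Ideal.subset_span (Set.mem_range_self i))
  exact (pow_dvd_pow _ hi).trans
    (Finset.dvd_prod_of_mem (fun i => x i ^ b i) (Finset.mem_univ i))

lemma monomialIdeal_le_cornerIdeal {U : Set (Fin p → ℕ)} {a : Fin p → ℕ}
    (h : ∀ b ∈ U, ¬ b ≤ a) : monomialIdeal x U ≤ cornerIdeal x a :=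
  Ideal.span_le.2 (Set.image_subset_iff.2 fun b hb => mono_mem_cornerIdeal x (h b hb))

lemma mono_mul_mem_cornerIdeal {b : Fin p → ℕ} {r : R}
    (hr : r ∈ cornerIdeal x b) (c : Fin p → ℕ) : mono x c * r ∈ cornerIdeal x (b + c) := by
  obtain ⟨t, rfl⟩ := Ideal.mem_span_range_iff_exists_fun.1 hr
  rw [Finset.mul_sum]
  refine Ideal.sum_mem _ fun i _ => ?_
  have hmono : mono x c * (t i * x i ^ (b i + 1)) = t i * mono x (c + Pi.single i (b i + 1)) := by
    rw [mono_add, mono_single]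
    ring
  rw [hmono]
  refine Ideal.mul_mem_left _ _ (mono_mem_cornerIdeal x fun hle => ?_)
  have := hle i
  simp only [Pi.add_apply, Pi.single_eq_same] at this
  omega

variable {x}

lemma mem_cornerIdeal_of_mono_mul_mem (hx : IsPermutableRegular x) {c b : Fin p → ℕ} {r : R}
    (h : mono x c * r ∈ cornerIdeal x (b + c)) : r ∈ cornerIdeal x b := by
  revert b r
  rw [← Finset.univ_sum_single c]
  refine Finset.sum_induction _
    (fun c => ∀ {b r}, mono x c * r ∈ cornerIdeal x (b + c) → r ∈ cornerIdeal x b) ?_ ?_ ?_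
  · intro c d hc hd b r h
    rw [mono_add, mul_comm (mono x c), mul_assoc, ← add_assoc] at h
    exact hc (hd h)
  · intro b r h
    simpa [mono] using h
  · intro j _ b r h
    have hxj : IsSMulRegular (R ⧸ Ideal.span ((fun i => x i ^ (b i + 1)) '' {j}ᶜ)) (x j) :=
      hx.isSMulRegular_quotient_span_pow _ _ (hx _ j (by simp))
    have hcompl : (fun i => x i ^ ((b + Pi.single j (c j) : Fin p → ℕ) i + 1)) '' {j}ᶜ =
        (fun i => x i ^ (b i + 1)) '' {j}ᶜ :=
      Set.image_congr fun i (hi : i ≠ j) => by simp [hi]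
    rw [cornerIdeal_eq_sup x _ j, hcompl, mono_single, Pi.add_apply, Pi.single_eq_same,
      add_right_comm, add_comm _ (c j)] at h
    rw [cornerIdeal_eq_sup x _ j]
    exact mem_span_pow_sup_of_pow_mul_mem hxj h

lemma mono_mul_mem_cornerIdeal_iff (hx : IsPermutableRegular x) {c b : Fin p → ℕ} {r : R} :
    mono x c * r ∈ cornerIdeal x (b + c) ↔ r ∈ cornerIdeal x b :=
  ⟨mem_cornerIdeal_of_mono_mul_mem hx, fun hr => mono_mul_mem_cornerIdeal x hr c⟩

lemma mul_mono_mem_cornerIdeal_iff (hx : IsPermutableRegular x) {a : Fin p → ℕ} {r : R} :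
    r * mono x a ∈ cornerIdeal x a ↔ r ∈ Ideal.span (Set.range x) := by
  rw [← cornerIdeal_zero, ← mono_mul_mem_cornerIdeal_iff hx (c := a) (r := r), zero_add,
    mul_comm]

lemma sum_mem_cornerIdeal_iff (hx : IsPermutableRegular x) {A : Finset (Fin p → ℕ)}
    (hA : IsAntichain (· ≤ ·) (A : Set (Fin p → ℕ))) (r : (Fin p → ℕ) → R) {a : Fin p → ℕ}
    (ha : a ∈ A) :
    ∑ b ∈ A, r b * mono x b ∈ cornerIdeal x a ↔ r a ∈ Ideal.span (Set.range x) := by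
  have hrest : ∑ b ∈ A.erase a, r b * mono x b ∈ cornerIdeal x a := by
    refine Ideal.sum_mem _ fun b hb => Ideal.mul_mem_left _ _ (mono_mem_cornerIdeal x ?_)
    exact hA (Finset.mem_of_mem_erase hb) ha (Finset.ne_of_mem_erase hb)
  rw [← Finset.add_sum_erase _ _ ha, Ideal.add_mem_iff_left _ hrest,
    mul_mono_mem_cornerIdeal_iff hx]

lemma mem_monomialIdeal_of_forall_mem_cornerIdeal (hx : IsPermutableRegular x) {f : R}
    {V : Set (Fin p → ℕ)} (hV : IsUpperSet V) (hfin : Vᶜ.Finite)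
    (hf : ∀ a ∉ V, f ∈ cornerIdeal x a) : f ∈ monomialIdeal x V := by
  induction hn : Vᶜ.ncard generalizing V with
  | zero =>
    have hVuniv : V = Set.univ := by simpa [Set.ncard_eq_zero hfin] using hn
    have hone : (1 : R) ∈ monomialIdeal x V := by
      simpa [mono] using mono_mem_monomialIdeal x (U := V) (a := 0) (by simp [hVuniv])
    simpa using Ideal.mul_mem_left _ f hone
  | succ n ih =>
    -- Add a maximal missing exponent `a` to `V`; as `f ∈ cornerIdeal x a`, the coefficient of `x^a`
    -- lies in `(x_1, …, x_p)`, which pushes that term back into `V`.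
    obtain ⟨a, haV, ha⟩ := hfin.exists_maximal (Set.nonempty_of_ncard_ne_zero (by omega))
    have hlt_mem {b : Fin p → ℕ} (hab : a < b) : b ∈ V :=
      by_contra fun hb => hab.not_ge (ha hb hab.le)
    have hcompl : (insert a V)ᶜ = Vᶜ \ {a} := by ext b; simp [not_or, and_comm]
    have hmem : f ∈ monomialIdeal x (insert a V) := by
      refine ih ?_ (hcompl ▸ hfin.sdiff) (fun b hb => hf b fun h => hb (.inr h)) ?_
      · rintro b c hbc (rfl | hb)
        · exact hbc.eq_or_lt.imp Eq.symm hlt_mem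
        · exact .inr (hV hbc hb)
      · rw [hcompl, Set.ncard_sdiff_singleton_of_mem haV, hn, Nat.add_sub_cancel]
    rw [monomialIdeal, Set.image_insert_eq] at hmem
    obtain ⟨c, m, hm, rfl⟩ := Submodule.mem_span_insert.1 hmem
    rw [smul_eq_mul] at hf ⊢
    have hm' : m ∈ cornerIdeal x a :=
      monomialIdeal_le_cornerIdeal x (fun b hb hba => haV (hV hba hb)) hm
    have hc : c ∈ Ideal.span (Set.range x) :=
      (mul_mono_mem_cornerIdeal_iff hx).1 ((Ideal.add_mem_iff_left _ hm').1 (hf a haV))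
    refine add_mem (mul_mono_mem_monomialIdeal x hc fun i => hlt_mem ?_) hm
    exact lt_add_of_pos_right a (Pi.single_pos.2 one_pos)

variable [hP : (Ideal.span (Set.range x)).IsPrime]

lemma mem_cornerIdeal_of_mul_mem (hx : IsPermutableRegular x) {k : R}
    (hk : k ∉ Ideal.span (Set.range x)) {a : Fin p → ℕ} {f : R} (h : k * f ∈ cornerIdeal x a) :
    f ∈ cornerIdeal x a := by
  have hreg : IsSMulRegular (R ⧸ Ideal.span (x '' Set.univ)) k := by
    rw [Set.image_univ, isSMulRegular_quotient_iff_mem_of_smul_mem]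
    exact fun r hr => (hP.mem_or_mem hr).resolve_left hk
  have hpow := hx.isSMulRegular_quotient_span_pow (fun i => a i + 1) Set.univ hreg
  rw [Set.image_univ] at hpow
  exact mem_of_isSMulRegular_quotient_of_smul_mem hpow h

lemma mono_mem_cornerIdeal_iff (hx : IsPermutableRegular x) {a b : Fin p → ℕ} :
    mono x b ∈ cornerIdeal x a ↔ ¬ b ≤ a := by
  refine ⟨fun h hba => hP.one_notMem ?_, mono_mem_cornerIdeal x⟩
  refine (mul_mono_mem_cornerIdeal_iff hx (a := b)).1 ?_
  simpa only [one_mul] using cornerIdeal_antitone x hba h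

lemma mono_dvd_mono_iff (hx : IsPermutableRegular x) {a b : Fin p → ℕ} :
    mono x a ∣ mono x b ↔ a ≤ b := by
  refine ⟨fun h => ?_, mono_dvd_mono x⟩
  by_contra hab
  exact (mono_mem_cornerIdeal_iff hx).1 (Ideal.mem_of_dvd _ h (mono_mem_cornerIdeal x hab)) le_rfl

end CornerIdeal

section Support

variable {x : Fin p → R} [hP : (Ideal.span (Set.range x)).IsPrime]

lemma isMinMonRep_iff (hx : IsPermutableRegular x) {f : R} {A : Finset (Fin p → ℕ)} :
    IsMinMonRep x f A ↔ IsMonRep x f A ∧ IsAntichain (· ≤ ·) (A : Set (Fin p → ℕ)) := by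
  simp only [IsMinMonRep, mono_dvd_mono_iff hx, IsAntichain, Set.Pairwise, Finset.mem_coe,
    Pi.compl_apply, compl_iff_not]

lemma IsMinMonRep.notMem_cornerIdeal_iff (hx : IsPermutableRegular x) {f : R}
    {A : Finset (Fin p → ℕ)} (hA : IsMinMonRep x f A) {a : Fin p → ℕ} :
    f ∉ cornerIdeal x a ↔ ∃ b ∈ A, b ≤ a := by
  obtain ⟨⟨h, r, hh, hr, hsum⟩, hanti⟩ := (isMinMonRep_iff hx).1 hA
  constructor
  · contrapose!
    intro hlt
    refine mem_cornerIdeal_of_mul_mem hx hh (hsum ▸ Ideal.sum_mem _ fun b hb => ?_)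
    exact Ideal.mul_mem_left _ _ (mono_mem_cornerIdeal x (hlt b hb))
  · rintro ⟨b, hb, hba⟩ hf
    refine hr b hb ((sum_mem_cornerIdeal_iff hx hanti r hb).1 ?_)
    exact hsum ▸ Ideal.mul_mem_left _ h (cornerIdeal_antitone x hba hf)

lemma IsMinMonRep.mem_iff_minimal (hx : IsPermutableRegular x) {f : R}
    {A : Finset (Fin p → ℕ)} (hA : IsMinMonRep x f A) {a : Fin p → ℕ} :
    a ∈ A ↔ Minimal (f ∉ cornerIdeal x ·) a := by
  have hanti := ((isMinMonRep_iff hx).1 hA).2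
  simp only [hA.notMem_cornerIdeal_iff hx]
  exact hanti.minimal_mem_upperClosure_iff_mem.symm

variable [IsNoetherianRing (Localization.AtPrime (Ideal.span (Set.range x)))]

lemma exists_mul_mem_monomialIdeal_minimal (hx : IsPermutableRegular x) (f : R) :
    ∃ h ∉ Ideal.span (Set.range x),
      h * f ∈ monomialIdeal x {a | Minimal (f ∉ cornerIdeal x ·) a} := by
  refine exists_notMem_mul_mem_of_forall_mem_sup_pow _ _ f fun N => ?_
  let D : Set (Fin p → ℕ) := {a | f ∉ cornerIdeal x a}
  let H : Set (Fin p → ℕ) := {a | N ≤ ∑ i, a i}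
  have hup : IsUpperSet (D ∪ H) := by
    refine .union (fun a b hab ha hb => ha (cornerIdeal_antitone x hab hb)) ?_
    exact fun a b hab (ha : N ≤ ∑ i, a i) => ha.trans (Finset.sum_le_sum fun i _ => hab i)
  have hfin : (D ∪ H)ᶜ.Finite := by
    refine (Set.finite_Iic fun _ : Fin p => N).subset fun a ha i => ?_
    have hlt : ∑ i, a i < N := by simpa [H] using fun h => ha (.inr h)
    exact (Finset.single_le_sum (fun _ _ => Nat.zero_le _) (Finset.mem_univ i)).trans hlt.le
  have hD : monomialIdeal x D ≤ monomialIdeal x {a | Minimal (f ∉ cornerIdeal x ·) a} := by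
    refine Ideal.span_le.2 (Set.image_subset_iff.2 fun a ha => ?_)
    obtain ⟨b, hba, hb⟩ := exists_minimal_le_of_wellFoundedLT (f ∉ cornerIdeal x ·) a ha
    exact Ideal.mem_of_dvd _ (mono_dvd_mono x hba) (mono_mem_monomialIdeal x hb)
  have hH : monomialIdeal x H ≤ Ideal.span (Set.range x) ^ N :=
    Ideal.span_le.2 (Set.image_subset_iff.2 fun a ha =>
      Ideal.pow_le_pow_right ha (mono_mem_span_range_pow x a))
  have hf : f ∈ monomialIdeal x (D ∪ H) :=
    mem_monomialIdeal_of_forall_mem_cornerIdeal hx hup hfin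
      fun a ha => by_contra fun h => ha (.inl h)
  exact sup_le_sup hD hH (monomialIdeal_union x D H ▸ hf)

lemma exists_isMinMonRep (hx : IsPermutableRegular x) (f : R) : ∃ A, IsMinMonRep x f A := by
  obtain ⟨h, hh, hf⟩ := exists_mul_mem_monomialIdeal_minimal hx f
  have hanti : IsAntichain (· ≤ ·) {a | Minimal (f ∉ cornerIdeal x ·) a} :=
    setOfPred_minimal_antichain _
  obtain ⟨A, hA⟩ := (WellQuasiOrderedLE.finite_of_isAntichain hanti).exists_finset_coe
  rw [← hA] at hf hanti
  obtain ⟨c, hc⟩ := exists_eq_sum_of_mem_monomialIdeal x hf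
  refine ⟨A, (isMinMonRep_iff hx).2 ⟨⟨h, c, hh, fun a ha hca => ?_, hc⟩, hanti⟩⟩
  have hamin : Minimal (f ∉ cornerIdeal x ·) a := (Set.ext_iff.1 hA a).1 ha
  exact hamin.prop (mem_cornerIdeal_of_mul_mem hx hh
    (hc ▸ (sum_mem_cornerIdeal_iff hx hanti c ha).2 hca))

lemma mem_supp_iff (hx : IsPermutableRegular x) {f : R} {a : Fin p → ℕ} :
    a ∈ supp x f ↔ Minimal (f ∉ cornerIdeal x ·) a := by
  have hex := exists_isMinMonRep hx f
  rw [supp, dif_pos hex, Finset.mem_coe, hex.choose_spec.mem_iff_minimal hx]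

lemma add_mem_supp_mono_mul (hx : IsPermutableRegular x) {f : R} {b : Fin p → ℕ}
    (hb : b ∈ supp x f) (c : Fin p → ℕ) : b + c ∈ supp x (mono x c * f) := by
  rw [mem_supp_iff hx] at hb ⊢
  refine ⟨fun h => hb.prop ((mono_mul_mem_cornerIdeal_iff hx).1 h), fun d hd hdbc => ?_⟩
  have hcd : c ≤ d := by
    by_contra hcd
    exact hd (Ideal.mul_mem_right _ _ (mono_mem_cornerIdeal x hcd))
  obtain ⟨e, rfl⟩ := exists_add_of_le hcd
  rw [add_comm c e] at hd hdbc ⊢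
  rw [mono_mul_mem_cornerIdeal_iff hx] at hd
  exact add_le_add_left (hb.le_of_le hd (le_of_add_le_add_right hdbc)) c

lemma iUnion_supp_eq (hx : IsPermutableRegular x) (I : Ideal R) :
    ⋃ f ∈ I, supp x f = {a | ¬ I ≤ cornerIdeal x a} := by
  ext a
  simp only [Set.mem_iUnion, exists_prop, Set.mem_ofPred_eq, SetLike.not_le_iff_exists]
  constructor
  · rintro ⟨f, hf, ha⟩
    exact ⟨f, hf, ((mem_supp_iff hx).1 ha).prop⟩
  · rintro ⟨f, hf, ha⟩
    obtain ⟨b, hba, hb⟩ := exists_minimal_le_of_wellFoundedLT (f ∉ cornerIdeal x ·) a ha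
    obtain ⟨c, rfl⟩ := exists_add_of_le hba
    exact ⟨mono x c * f, I.mul_mem_left _ hf,
      add_mem_supp_mono_mul hx ((mem_supp_iff hx).2 hb) c⟩

lemma ΓI_eq_convexHull (hx : IsPermutableRegular x) (I : Ideal R) :
    ΓI x I = convexHull ℝ (toR '' {a | ¬ I ≤ cornerIdeal x a}) := by
  rw [← iUnion_supp_eq hx]
  rfl

theorem newtonPolyhedron_eq_convexHull_of_generators_general (hx : IsPermutableRegular x)
    (G : Set R) : ΓI x (Ideal.span G) = convexHull ℝ (⋃ g ∈ G, ΓE x g) := by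
  have hexponents : {a | ¬ Ideal.span G ≤ cornerIdeal x a} =
      ⋃ g ∈ G, {a | ¬ Ideal.span {g} ≤ cornerIdeal x a} := by
    ext a
    simp [Ideal.span_le, Set.not_subset]
  simp only [ΓE, ΓI_eq_convexHull hx, hexponents, Set.image_iUnion₂]
  exact ((convexHull ℝ).closure_iSup₂_closure _).symm

end Support

section GRSOP

variable {x : Fin p → R}

lemma IsGRSOP.isPrime_span_image (hx : IsGRSOP x) (S : Set (Fin p)) :
    (Ideal.span (x '' S)).IsPrime :=
  (Ideal.Quotient.isDomain_iff_prime _).1 (hx.2 S).1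

lemma IsGRSOP.isPrime_span_range (hx : IsGRSOP x) : (Ideal.span (Set.range x)).IsPrime :=
  Set.image_univ (f := x) ▸ hx.isPrime_span_image Set.univ

lemma IsGRSOP.notMem_span_image (hx : IsGRSOP x) {i : Fin p} {S : Set (Fin p)} (hi : i ∉ S) :
    x i ∉ Ideal.span (x '' S) := by
  intro hmem
  obtain ⟨q, rfl⟩ : ∃ q, p = q + 1 := Nat.exists_eq_add_one.2 i.pos
  let σ := Equiv.swap i (Fin.last q)
  obtain ⟨hne_top, hreg⟩ := hx.1 σ
  have hsub : x '' S ⊆ (x ∘ σ) '' {j | j < Fin.last q} := by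
    rintro _ ⟨j, hj, rfl⟩
    refine ⟨σ j, Fin.lt_last_iff_ne_last.2 fun h => ?_, by simp [σ]⟩
    have hji : j = i := by simpa [σ] using Equiv.swap_apply_eq_iff.1 h
    exact hi (hji ▸ hj)
  have hone : (1 : R) ∈ Ideal.span ((x ∘ σ) '' {j | j < Fin.last q}) :=
    hreg (Fin.last q) 1 (by simpa [σ] using Ideal.span_mono hsub hmem)
  exact hne_top ((Ideal.eq_top_iff_one _).2 (Ideal.span_mono (Set.image_subset_range _ _) hone))

lemma IsGRSOP.isPermutableRegular (hx : IsGRSOP x) : IsPermutableRegular x := by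
  intro S i hi
  rw [isSMulRegular_quotient_iff_mem_of_smul_mem]
  exact fun r hr =>
    ((hx.isPrime_span_image S).mem_or_mem hr).resolve_left (hx.notMem_span_image hi)

end GRSOP

/-- the Newton polyhedron is computed from any generating set. -/
theorem newtonPolyhedron_eq_convexHull_of_generators {R : Type*} [CommRing R] {p : ℕ}
    (x : Fin p → R) (hR : IsRegularDomain R) (hx : IsGRSOP x) (I : Ideal R)
    (s : ℕ) (g : Fin s → R) (hgen : Ideal.span (Set.range g) = I) :
    ΓI x I = convexHull ℝ (⋃ i : Fin s, ΓE x (g i)) := by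
  have hP := hx.isPrime_span_range
  have hnoeth : IsNoetherianRing (Localization.AtPrime (Ideal.span (Set.range x))) := (hR.2 _ hP).1
  simpa only [hgen, Set.biUnion_range] using
    newtonPolyhedron_eq_convexHull_of_generators_general hx.isPermutableRegular (Set.range g)

end NND
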